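/- arXiv:2308.12012 — 4 statements merged into one kernel-verified Lean document; each statement's English description precedes it below -/
import Mathlib

section
/- On the plane ℝ² equipped with the river metric d*, there exists a mapping W : ℝ² × ℝ² × [0,1] → ℝ² such that for all v₁, v₂ ∈ ℝ² and all λ ∈ [0,1] one has d*(W(v₁,v₂,λ), v₁) = (1−λ)·d*(v₁,v₂) and d*(W(v₁,v₂,λ), v₂) = λ·d*(v₁,v₂), and moreover for every u ∈ ℝ², d*(u, W(v₁,v₂,λ)) ≤ λ·d*(u,v₁) + (1−λ)·d*(u,v₂). In particular, (ℝ², d*) is a W-convex metric space in the sense of Takahashi. -/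
/-- The river metric on ℝ². -/
noncomputable def riverDist (u v : ℝ × ℝ) : ℝ :=
  if u.1 = v.1 then |u.2 - v.2| else |u.2| + |v.2| + |u.1 - v.1|

/-- The metric segment between two points of ℝ² with the river metric. -/
def riverSegment (u v : ℝ × ℝ) : Set (ℝ × ℝ) :=
  {z | riverDist u z + riverDist z v = riverDist u v}

/-- A set is convex (w.r.t. the river metric) if it contains all metric segments
between its points. -/
def IsRiverConvex (K : Set (ℝ × ℝ)) : Prop :=
  ∀ u ∈ K, ∀ v ∈ K, riverSegment u v ⊆ K

/-- `m` is a midpoint of `u` and `v` for the river metric. -/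
def IsRiverMidpoint (u v m : ℝ × ℝ) : Prop :=
  riverDist u m = riverDist u v / 2 ∧ riverDist m v = riverDist u v / 2

/-!
The river plane is an `ℝ`-tree: it satisfies the four-point condition, and two points on different
vertical lines are joined by a geodesic which descends to the river, follows it and climbs again.
In an `ℝ`-tree let `w` lie on a geodesic from `p` to `q`, at distance `(1 - l) D` from `p` and `l D`
from `q`, where `D = d(p, q)`. The four-point condition for `u, w, p, q` gives
`d(u, w) ≤ max (d(u, p) - (1 - l) D) (d(u, q) - l D)`, and the triangle inequality bounds both terms
by `l d(u, p) + (1 - l) d(u, q)`.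
-/

section FourPoint

variable {X : Type*} {d : X → X → ℝ}

/-- The four-point condition of Buneman, also known as `0`-hyperbolicity: among metrics it singles
out the subspaces of `ℝ`-trees. It is stated for a bare function `d` because it is also used to
obtain the triangle inequality, see `FourPointCondition.triangle`. -/
def FourPointCondition (d : X → X → ℝ) : Prop :=
  ∀ u w p q, d u w + d p q ≤ max (d u p + d w q) (d u q + d w p)

theorem FourPointCondition.triangle (hd : FourPointCondition d) (hself : ∀ x, d x x = 0)
    (hcomm : ∀ x y, d x y = d y x) (x y z : X) : d x z ≤ d x y + d y z := by
  simpa [hself, hcomm z y] using hd x z y y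

theorem abs_sub_add_abs_sub_le_max {α : Type*} [AddCommGroup α] [LinearOrder α]
    [IsOrderedAddMonoid α] (a b c d : α) :
    |a - b| + |c - d| ≤ max (|a - c| + |b - d|) (|a - d| + |b - c|) := by
  have h_sum : |(a - b) + (c - d)| ≤ |a - d| + |b - c| := by
    rw [show (a - b) + (c - d) = (a - d) - (b - c) by abel]
    exact abs_sub _ _
  have h_diff : |(a - b) - (c - d)| ≤ |a - c| + |b - d| := by
    rw [show (a - b) - (c - d) = (a - c) - (b - d) by abel]
    exact abs_sub _ _
  have h_max : |a - b| + |c - d| = max |(a - b) + (c - d)| |(a - b) - (c - d)| := by grind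
  rw [h_max, max_comm]
  exact max_le_max h_diff h_sum

end FourPoint

section PseudoMetricSpace

variable {X : Type*} [PseudoMetricSpace X]

/-- Two points are joined geodesically if their distance can be divided in any proportion by a
third point. A single geodesic path realising all the divisions is not demanded: a convex structure
only needs the dividing points. -/
def GeodesicallyJoined (p q : X) : Prop :=
  ∀ ⦃s t : ℝ⦄, 0 ≤ s → 0 ≤ t → s + t = dist p q → ∃ w, dist p w = s ∧ dist w q = t

theorem GeodesicallyJoined.trans {p m q : X} (hpm : GeodesicallyJoined p m)
    (hmq : GeodesicallyJoined m q) (hm : dist p m + dist m q = dist p q) :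
    GeodesicallyJoined p q := by
  intro s t hs ht hst
  rcases le_total s (dist p m) with hsm | hms
  · obtain ⟨w, hpw, hwm⟩ := hpm hs (sub_nonneg.2 hsm) (add_sub_cancel _ _)
    exact ⟨w, hpw, by linarith [dist_triangle p w q, dist_triangle w m q]⟩
  · obtain ⟨w, hmw, hwq⟩ := hmq (sub_nonneg.2 hms) ht (by linarith)
    exact ⟨w, by linarith [dist_triangle p w q, dist_triangle p m w], hwq⟩

theorem GeodesicallyJoined.of_isometry {f : ℝ → X} (hf : Isometry f) (a b : ℝ) :
    GeodesicallyJoined (f a) (f b) := by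
  intro s t hs ht hst
  simp only [hf.dist_eq, Real.dist_eq] at hst
  obtain ⟨c, hac, hcb⟩ : ∃ c, |a - c| = s ∧ |c - b| = t := by
    rcases le_total a b with hab | hba
    · exact ⟨a + s, by grind⟩
    · exact ⟨a - s, by grind⟩
  exact ⟨f c, by rw [hf.dist_eq, Real.dist_eq, hac], by rw [hf.dist_eq, Real.dist_eq, hcb]⟩

theorem FourPointCondition.dist_le_of_dist_eq (hX : FourPointCondition (dist : X → X → ℝ))
    {p q w : X} {l : ℝ} (hl : l ∈ Set.Icc (0 : ℝ) 1) (hwp : dist w p = (1 - l) * dist p q)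
    (hwq : dist w q = l * dist p q) (u : X) :
    dist u w ≤ l * dist u p + (1 - l) * dist u q := by
  have hp : (1 - l) * dist u p ≤ (1 - l) * (dist u q + dist p q) :=
    mul_le_mul_of_nonneg_left (dist_triangle_right u p q) (sub_nonneg.2 hl.2)
  have hq : l * dist u q ≤ l * (dist u p + dist p q) :=
    mul_le_mul_of_nonneg_left (dist_triangle u p q) hl.1
  rcases le_max_iff.1 (hX u w p q) with h | h <;> linarith

theorem FourPointCondition.exists_convexStructure (hX : FourPointCondition (dist : X → X → ℝ))
    (hjoin : ∀ p q : X, GeodesicallyJoined p q) :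
    ∃ W : X → X → ℝ → X, ∀ p q : X, ∀ l ∈ Set.Icc (0 : ℝ) 1,
      dist (W p q l) p = (1 - l) * dist p q ∧ dist (W p q l) q = l * dist p q ∧
        ∀ u, dist u (W p q l) ≤ l * dist u p + (1 - l) * dist u q := by
  have hdiv : ∀ p q : X, ∀ l ∈ Set.Icc (0 : ℝ) 1, ∃ w,
      dist w p = (1 - l) * dist p q ∧ dist w q = l * dist p q := by
    intro p q l ⟨hl0, hl1⟩
    obtain ⟨w, hpw, hwq⟩ := hjoin p q (mul_nonneg (sub_nonneg.2 hl1) dist_nonneg)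
      (mul_nonneg hl0 dist_nonneg) (by ring)
    exact ⟨w, by rw [dist_comm, hpw], hwq⟩
  choose! W hW using hdiv
  refine ⟨W, fun p q l hl ↦ ?_⟩
  obtain ⟨hwp, hwq⟩ := hW p q l hl
  exact ⟨hwp, hwq, hX.dist_le_of_dist_eq hl hwp hwq⟩

end PseudoMetricSpace

section RiverDist

theorem riverDist_of_fst_eq {u v : ℝ × ℝ} (h : u.1 = v.1) : riverDist u v = |u.2 - v.2| :=
  if_pos h

theorem riverDist_of_fst_ne {u v : ℝ × ℝ} (h : u.1 ≠ v.1) :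
    riverDist u v = |u.2| + |v.2| + |u.1 - v.1| :=
  if_neg h

theorem riverDist_self (u : ℝ × ℝ) : riverDist u u = 0 := by
  simp [riverDist]

theorem riverDist_comm (u v : ℝ × ℝ) : riverDist u v = riverDist v u := by
  simp only [riverDist, eq_comm, abs_sub_comm, add_comm |u.2|]

theorem riverDist_le (u v : ℝ × ℝ) : riverDist u v ≤ |u.2| + |v.2| + |u.1 - v.1| := by
  by_cases h : u.1 = v.1
  · simpa [riverDist_of_fst_eq h, h] using abs_sub u.2 v.2
  · exact (riverDist_of_fst_ne h).le

theorem eq_of_riverDist_eq_zero {u v : ℝ × ℝ} (h : riverDist u v = 0) : u = v := by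
  by_cases huv : u.1 = v.1
  · rw [riverDist_of_fst_eq huv, abs_eq_zero, sub_eq_zero] at h
    exact Prod.ext huv h
  · rw [riverDist_of_fst_ne huv] at h
    have hpos : 0 < |u.1 - v.1| := abs_pos.2 (sub_ne_zero.2 huv)
    linarith [abs_nonneg u.2, abs_nonneg v.2]

theorem riverDist_add_le_of_fst_eq_of_fst_ne {u w p q : ℝ × ℝ} (huw : u.1 = w.1) (hup : u.1 = p.1)
    (huq : u.1 ≠ q.1) :
    riverDist u w + riverDist p q ≤
      max (riverDist u p + riverDist w q) (riverDist u q + riverDist w p) := by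
  have hwp : w.1 = p.1 := huw.symm.trans hup
  have hwq : w.1 ≠ q.1 := huw.symm.trans_ne huq
  have hpq : p.1 ≠ q.1 := hup.symm.trans_ne huq
  rw [riverDist_of_fst_eq huw, riverDist_of_fst_eq hup, riverDist_of_fst_eq hwp,
    riverDist_of_fst_ne huq, riverDist_of_fst_ne hwq, riverDist_of_fst_ne hpq, ← hwp, ← huw]
  -- On the line of `u`, `w` and `p`, the point `q` acts like the foot `0`, up to a constant.
  have hline := abs_sub_add_abs_sub_le_max u.2 w.2 p.2 0
  simp only [sub_zero] at hline
  grind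

theorem riverDist_add_le_of_fst_eq {u w : ℝ × ℝ} (huw : u.1 = w.1) (p q : ℝ × ℝ) :
    riverDist u w + riverDist p q ≤
      max (riverDist u p + riverDist w q) (riverDist u q + riverDist w p) := by
  by_cases hup : u.1 = p.1 <;> by_cases huq : u.1 = q.1
  · rw [riverDist_of_fst_eq huw, riverDist_of_fst_eq hup, riverDist_of_fst_eq huq,
      riverDist_of_fst_eq (hup.symm.trans huq), riverDist_of_fst_eq (huw.symm.trans hup),
      riverDist_of_fst_eq (huw.symm.trans huq)]
    exact abs_sub_add_abs_sub_le_max _ _ _ _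
  · exact riverDist_add_le_of_fst_eq_of_fst_ne huw hup huq
  · rw [riverDist_comm p q, max_comm]
    exact riverDist_add_le_of_fst_eq_of_fst_ne huw huq hup
  · have hwq : w.1 ≠ q.1 := huw.symm.trans_ne huq
    have huw_le : riverDist u w ≤ |u.2| + |w.2| := by simpa [huw] using riverDist_le u w
    have hpq_le : |p.1 - q.1| ≤ |u.1 - p.1| + |w.1 - q.1| := by
      simpa only [huw, abs_sub_comm w.1 p.1] using abs_sub_le p.1 w.1 q.1
    refine le_max_of_le_left ?_
    rw [riverDist_of_fst_ne hup, riverDist_of_fst_ne hwq]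
    linarith [riverDist_le p q]

theorem riverDist_add_eq_of_fst_eq {u w p q : ℝ × ℝ} (hup : u.1 = p.1) (huw : u.1 ≠ w.1)
    (hpq : p.1 ≠ q.1) :
    riverDist u w + riverDist p q = riverDist u q + riverDist w p := by
  have huq : u.1 ≠ q.1 := hup.trans_ne hpq
  have hwp : w.1 ≠ p.1 := huw.symm.trans_eq hup
  rw [riverDist_of_fst_ne huw, riverDist_of_fst_ne hpq, riverDist_of_fst_ne huq,
    riverDist_of_fst_ne hwp, hup, abs_sub_comm w.1 p.1]
  ring

theorem riverDist_add_le_of_fst_ne {u w p q : ℝ × ℝ} (huw : u.1 ≠ w.1) (hpq : p.1 ≠ q.1) :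
    riverDist u w + riverDist p q ≤
      max (riverDist u p + riverDist w q) (riverDist u q + riverDist w p) := by
  by_cases hup : u.1 = p.1
  · exact le_max_of_le_right (riverDist_add_eq_of_fst_eq hup huw hpq).le
  by_cases hwq : w.1 = q.1
  · refine le_max_of_le_right ?_
    rw [riverDist_comm u w, riverDist_comm p q, add_comm (riverDist u q)]
    exact (riverDist_add_eq_of_fst_eq hwq huw.symm hpq.symm).le
  by_cases huq : u.1 = q.1
  · refine le_max_of_le_left ?_
    rw [riverDist_comm p q]
    exact (riverDist_add_eq_of_fst_eq huq huw hpq.symm).le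
  by_cases hwp : w.1 = p.1
  · refine le_max_of_le_left ?_
    rw [riverDist_comm u w, add_comm (riverDist u p)]
    exact (riverDist_add_eq_of_fst_eq hwp huw.symm hpq).le
  rw [riverDist_of_fst_ne huw, riverDist_of_fst_ne hpq, riverDist_of_fst_ne hup,
    riverDist_of_fst_ne hwq, riverDist_of_fst_ne huq, riverDist_of_fst_ne hwp]
  have hline := abs_sub_add_abs_sub_le_max u.1 w.1 p.1 q.1
  grind

theorem fourPointCondition_riverDist : FourPointCondition riverDist := by
  intro u w p q
  by_cases huw : u.1 = w.1
  · exact riverDist_add_le_of_fst_eq huw p q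
  by_cases hpq : p.1 = q.1
  · have h := riverDist_add_le_of_fst_eq hpq u w
    rwa [add_comm, riverDist_comm p u, riverDist_comm q w, riverDist_comm p w,
      riverDist_comm q u, add_comm (riverDist w p)] at h
  · exact riverDist_add_le_of_fst_ne huw hpq

end RiverDist

/-- The plane with the river metric. It is a type synonym, since `ℝ × ℝ` carries the sup metric. -/
def RiverPlane : Type := ℝ × ℝ

noncomputable instance : MetricSpace RiverPlane where
  dist := riverDist
  dist_self := riverDist_self
  dist_comm := riverDist_comm
  dist_triangle := fourPointCondition_riverDist.triangle riverDist_self riverDist_comm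
  eq_of_dist_eq_zero := eq_of_riverDist_eq_zero

namespace RiverPlane

/-- The point with coordinates `x` and `y`. A bare pair `(x, y)` would be elaborated in `ℝ × ℝ`,
whose distance is the sup metric. -/
def point (x y : ℝ) : RiverPlane := (x, y)

theorem dist_point (x y x' y' : ℝ) :
    dist (point x y) (point x' y') = if x = x' then |y - y'| else |y| + |y'| + |x - x'| :=
  rfl

theorem isometry_point (x : ℝ) : Isometry (point x) :=
  Isometry.of_dist_eq fun _ _ ↦ by rw [dist_point, if_pos rfl, Real.dist_eq]

theorem isometry_point_zero : Isometry fun x ↦ point x 0 := by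
  refine Isometry.of_dist_eq fun x x' ↦ ?_
  by_cases h : x = x' <;> simp [dist_point, h, Real.dist_eq]

theorem geodesicallyJoined_point (a b c d : ℝ) : GeodesicallyJoined (point a b) (point c d) := by
  by_cases hac : a = c
  · subst hac
    exact .of_isometry (isometry_point a) b d
  have hdown : GeodesicallyJoined (point a b) (point a 0) := .of_isometry (isometry_point a) b 0
  have halong : GeodesicallyJoined (point a 0) (point c 0) := .of_isometry isometry_point_zero a c
  have hup : GeodesicallyJoined (point c 0) (point c d) := .of_isometry (isometry_point c) 0 d
  have hlength_shore : dist (point a b) (point a 0) + dist (point a 0) (point c 0) =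
      dist (point a b) (point c 0) := by
    simp [dist_point, hac]
  have hlength : dist (point a b) (point c 0) + dist (point c 0) (point c d) =
      dist (point a b) (point c d) := by
    simp only [dist_point, hac, if_true, if_false, abs_zero, zero_sub, abs_neg]
    ring
  exact (hdown.trans halong hlength_shore).trans hup hlength

end RiverPlane

/-- (ℝ², d*) is a W-convex metric space in the sense of Takahashi: there is a
convex structure `W` realizing the prescribed distances. -/
theorem river_W_convex_structure :
    ∃ W : ℝ × ℝ → ℝ × ℝ → ℝ → ℝ × ℝ,
      ∀ v₁ v₂ : ℝ × ℝ, ∀ lam ∈ Set.Icc (0:ℝ) 1,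
        riverDist (W v₁ v₂ lam) v₁ = (1 - lam) * riverDist v₁ v₂ ∧
        riverDist (W v₁ v₂ lam) v₂ = lam * riverDist v₁ v₂ ∧
        ∀ u : ℝ × ℝ,
          riverDist u (W v₁ v₂ lam) ≤
            lam * riverDist u v₁ + (1 - lam) * riverDist u v₂ := by
  exact FourPointCondition.exists_convexStructure (X := RiverPlane)
    fourPointCondition_riverDist fun p q ↦ RiverPlane.geodesicallyJoined_point p.1 p.2 q.1 q.2
end

section
/- Let v₁ = (x₁,y₁) and v₂ = (x₂,y₂) be points of ℝ² with x₁ ≠ x₂ and y₁ ≥ 0, let d = d*(v₁,v₂), and let λ ∈ [0,1] satisfy λ ≥ 1 − y₁/d. Then the point z = (x₁, λ·y₁ − (1−λ)·(|y₂| + |x₁−x₂|)) satisfies d*(z, v₁) = (1−λ)·d and d*(z, v₂) = λ·d. -/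
theorem riverDist_pos_of_fst_ne {u v : ℝ × ℝ} (h : u.1 ≠ v.1) : 0 < riverDist u v := by
  rw [riverDist_of_fst_ne h]
  exact add_pos_of_nonneg_of_pos (by positivity) (abs_pos.mpr (sub_ne_zero.mpr h))

theorem riverDist_sub_snd_self (x y s : ℝ) : riverDist (x, y - s) (x, y) = |s| := by
  simp [riverDist_of_fst_eq]

theorem riverDist_sub_snd_of_fst_ne {x y s : ℝ} {v : ℝ × ℝ} (hx : x ≠ v.1) (hy : 0 ≤ y)
    (hs : s ≤ y) : riverDist (x, y - s) v = riverDist (x, y) v - s := by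
  rw [riverDist_of_fst_ne hx, riverDist_of_fst_ne hx, abs_of_nonneg (sub_nonneg.mpr hs),
    abs_of_nonneg hy]
  ring

theorem river_W_case_a (x₁ y₁ x₂ y₂ : ℝ) (hx : x₁ ≠ x₂) (hy : 0 ≤ y₁)
    (lam : ℝ) (hlam : lam ∈ Set.Icc (0:ℝ) 1)
    (hge : 1 - y₁ / riverDist (x₁, y₁) (x₂, y₂) ≤ lam) :
    riverDist (x₁, lam * y₁ - (1 - lam) * (|y₂| + |x₁ - x₂|)) (x₁, y₁) =
      (1 - lam) * riverDist (x₁, y₁) (x₂, y₂) ∧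
    riverDist (x₁, lam * y₁ - (1 - lam) * (|y₂| + |x₁ - x₂|)) (x₂, y₂) =
      lam * riverDist (x₁, y₁) (x₂, y₂) := by
  set d := riverDist (x₁, y₁) (x₂, y₂) with hd
  have hd_pos : 0 < d := riverDist_pos_of_fst_ne hx
  have hd_eq : d = y₁ + |y₂| + |x₁ - x₂| := by
    rw [hd, riverDist_of_fst_ne hx, abs_of_nonneg hy]
  -- The point `z` is `v₁` moved down by `(1 - lam) * d`; the bound on `lam` keeps it from crossing
  -- the river.
  have hz : lam * y₁ - (1 - lam) * (|y₂| + |x₁ - x₂|) = y₁ - (1 - lam) * d := by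
    rw [hd_eq]
    ring
  have hdescent_nonneg : 0 ≤ (1 - lam) * d := mul_nonneg (sub_nonneg.mpr hlam.2) hd_pos.le
  have hdescent_le : (1 - lam) * d ≤ y₁ := (le_div_iff₀ hd_pos).mp (sub_le_comm.mp hge)
  rw [hz]
  constructor
  · rw [riverDist_sub_snd_self, abs_of_nonneg hdescent_nonneg]
  · rw [riverDist_sub_snd_of_fst_ne hx hy hdescent_le]
    ring
end

section
/- Let A, B ⊆ ℝ² (with the river metric d*) be convex sets such that A ∩ B ≠ ∅. Then A ∪ B is a convex set. -/
section TreeDistance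

variable {X R : Type*}

/-- The metric segment between two points, for an arbitrary distance function. -/
def distSegment [Add R] (d : X → X → R) (u v : X) : Set X :=
  {z | d u z + d z v = d u v}

/-- Convexity in the metric sense: a set containing the segments between its points. -/
def IsDistConvex [Add R] (d : X → X → R) (K : Set X) : Prop :=
  ∀ u ∈ K, ∀ v ∈ K, distSegment d u v ⊆ K

variable [AddCommMonoid R] [LinearOrder R]

/-- A distance function vanishing on the diagonal and satisfying Buneman's four-point condition, as
the path metric of a tree does. Symmetry and the triangle inequality are not fields because they
follow by specialising the four points; points at distance zero need not be equal. -/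
structure IsTreeDist (d : X → X → R) : Prop where
  self (x : X) : d x x = 0
  four_point (x y z w : X) : d x y + d z w ≤ max (d x z + d y w) (d x w + d y z)

namespace IsTreeDist

variable {d : X → X → R}

theorem triangle_left (hd : IsTreeDist d) (x y z : X) : d x y ≤ d z x + d z y := by
  simpa only [hd.self, zero_add, add_comm (d z y), max_self] using hd.four_point z z x y

theorem comm (hd : IsTreeDist d) (x y : X) : d x y = d y x := by
  have le_swap (x y : X) : d x y ≤ d y x := by
    simpa only [hd.self, add_zero] using hd.triangle_left x y y
  exact le_antisymm (le_swap x y) (le_swap y x)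

theorem triangle (hd : IsTreeDist d) (x y z : X) : d x z ≤ d x y + d y z :=
  hd.comm x y ▸ hd.triangle_left x z y

theorem distSegment_subset_union [IsOrderedCancelAddMonoid R] (hd : IsTreeDist d) (u v w : X) :
    distSegment d u v ⊆ distSegment d u w ∪ distSegment d w v := by
  intro z (hz : d u z + d z v = d u v)
  have four_point : d u z + d z v + d z w ≤ max (d u w + d z v) (d u z + d w v) := by
    simpa only [hz, hd.comm v, hd.comm w z, max_comm] using hd.four_point u v z w
  rcases le_max_iff.mp four_point with h | h
  · have : d u z + d z w ≤ d u w :=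
      le_of_add_le_add_right (a := d z v) (by rwa [add_right_comm])
    exact Or.inl (le_antisymm this (hd.triangle u z w))
  · have : d w z + d z v ≤ d w v :=
      le_of_add_le_add_left (a := d u z) (by rwa [hd.comm w z, add_comm (d z w), ← add_assoc])
    exact Or.inr (le_antisymm this (hd.triangle w z v))

end IsTreeDist

theorem river_union_convex_general [IsOrderedCancelAddMonoid R] {d : X → X → R}
    (hd : IsTreeDist d) {A B : Set X} (hA : IsDistConvex d A) (hB : IsDistConvex d B)
    (hAB : (A ∩ B).Nonempty) : IsDistConvex d (A ∪ B) := by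
  obtain ⟨w, hwA, hwB⟩ := hAB
  rintro u (hu | hu) v (hv | hv)
  · exact (hA u hu v hv).trans Set.subset_union_left
  · exact (hd.distSegment_subset_union u v w).trans
      (Set.union_subset_union (hA u hu w hwA) (hB w hwB v hv))
  · rw [Set.union_comm]
    exact (hd.distSegment_subset_union u v w).trans
      (Set.union_subset_union (hB u hu w hwB) (hA w hwA v hv))
  · exact (hB u hu v hv).trans Set.subset_union_right

end TreeDistance

section AbsSub

variable {R : Type*} [AddCommGroup R] [LinearOrder R] [IsOrderedAddMonoid R]

theorem abs_add_abs_eq_max (a b : R) : |a| + |b| = max |a - b| |a + b| := by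
  grind

theorem abs_sub_four_point (a b c e : R) :
    |a - b| + |c - e| ≤ max (|a - c| + |b - e|) (|a - e| + |b - c|) :=
  calc
    |a - b| + |c - e| = max |a - b - (c - e)| |a - b + (c - e)| := abs_add_abs_eq_max _ _
    _ = max |a - c - (b - e)| |a - e - (b - c)| := by congr 2 <;> abel
    _ ≤ max (|a - c| + |b - e|) (|a - e| + |b - c|) := max_le_max (abs_sub _ _) (abs_sub _ _)

end AbsSub

theorem riverDist_four_point_of_fst_eq_fst_eq {x y z : ℝ × ℝ} (hxy : x.1 = y.1) (hxz : x.1 = z.1)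
    (w : ℝ × ℝ) :
    riverDist x y + riverDist z w ≤
      max (riverDist x z + riverDist y w) (riverDist x w + riverDist y z) := by
  have hyz : y.1 = z.1 := hxy.symm.trans hxz
  by_cases hxw : x.1 = w.1
  · rw [riverDist_of_fst_eq hxy, riverDist_of_fst_eq hxz, riverDist_of_fst_eq hxw,
      riverDist_of_fst_eq (hxz.symm.trans hxw), riverDist_of_fst_eq (hxy.symm.trans hxw),
      riverDist_of_fst_eq hyz]
    exact abs_sub_four_point x.2 y.2 z.2 w.2
  -- Seen from the vertical line through `x`, `y`, `z`, the point `w` is at height `0`, up to a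
  -- constant.
  · rw [riverDist_of_fst_eq hxy, riverDist_of_fst_eq hxz, riverDist_of_fst_eq hyz,
      riverDist_of_fst_ne hxw, riverDist_of_fst_ne (hxz ▸ hxw), riverDist_of_fst_ne (hxy ▸ hxw),
      ← hxz, ← hxy]
    have four_point := abs_sub_four_point x.2 y.2 z.2 0
    simp only [sub_zero, le_max_iff] at four_point ⊢
    exact four_point.imp (fun h ↦ by linarith) (fun h ↦ by linarith)

theorem riverDist_four_point_of_fst_eq {x z : ℝ × ℝ} (hxz : x.1 = z.1) (y w : ℝ × ℝ) :
    riverDist x y + riverDist z w ≤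
      max (riverDist x z + riverDist y w) (riverDist x w + riverDist y z) := by
  by_cases hxy : x.1 = y.1
  · exact riverDist_four_point_of_fst_eq_fst_eq hxy hxz w
  by_cases hzw : z.1 = w.1
  · simpa only [riverDist_comm, add_comm, max_comm] using
      riverDist_four_point_of_fst_eq_fst_eq hzw hxz.symm y
  -- The paths between `x` or `z` and `y` or `w` all pass through the foot of the vertical line.
  have through_foot :
      riverDist x y + riverDist z w = riverDist x w + riverDist y z := by
    rw [riverDist_comm y z, riverDist_of_fst_ne hxy, riverDist_of_fst_ne hzw,
      riverDist_of_fst_ne (hxz ▸ hzw), riverDist_of_fst_ne (hxz ▸ hxy), hxz]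
    ring
  exact through_foot.le.trans (le_max_right _ _)

theorem riverDist_four_point_of_fst_ne {x y z w : ℝ × ℝ} (hxz : x.1 ≠ z.1) (hyw : y.1 ≠ w.1)
    (hxw : x.1 ≠ w.1) (hyz : y.1 ≠ z.1) :
    riverDist x y + riverDist z w ≤
      max (riverDist x z + riverDist y w) (riverDist x w + riverDist y z) := by
  rw [riverDist_of_fst_ne hxz, riverDist_of_fst_ne hyw, riverDist_of_fst_ne hxw,
    riverDist_of_fst_ne hyz]
  have hxy := riverDist_le x y
  have hzw := riverDist_le z w
  have four_point := abs_sub_four_point x.1 y.1 z.1 w.1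
  rw [le_max_iff] at four_point ⊢
  exact four_point.imp (fun h ↦ by linarith) (fun h ↦ by linarith)

theorem isTreeDist_riverDist : IsTreeDist riverDist where
  self := riverDist_self
  four_point x y z w := by
    by_cases hxz : x.1 = z.1
    · exact riverDist_four_point_of_fst_eq hxz y w
    by_cases hyw : y.1 = w.1
    · simpa only [riverDist_comm, add_comm, max_comm] using
        riverDist_four_point_of_fst_eq hyw x z
    by_cases hxw : x.1 = w.1
    · simpa only [riverDist_comm, max_comm] using riverDist_four_point_of_fst_eq hxw y z
    by_cases hyz : y.1 = z.1
    · simpa only [riverDist_comm, add_comm, max_comm] using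
        riverDist_four_point_of_fst_eq hyz x w
    exact riverDist_four_point_of_fst_ne hxz hyw hxw hyz

theorem river_union_convex (A B : Set (ℝ × ℝ)) (hA : IsRiverConvex A)
    (hB : IsRiverConvex B) (hAB : (A ∩ B).Nonempty) :
    IsRiverConvex (A ∪ B) := by
  exact river_union_convex_general isTreeDist_riverDist hA hB hAB
end

section
/- The space (ℝ², d*) is globally non-positively Busemann curved (NPBC): for any three points x, y, z ∈ ℝ², any midpoint m₁ of x and z, and any midpoint m₂ of y and z, one has d*(m₁, m₂) ≤ (1/2)·d*(x,y). -/
/-!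
The river plane is a real tree, and only the four-point condition (0-hyperbolicity) matters for
the curvature bound. In a 0-hyperbolic space the midpoint `m` of `x` and `z` satisfies
`d(p, m) + d(x, z) / 2 ≤ max (d(p, x), d(p, z))` for every `p`; using this for `m₁` seen from `y`
and for `m₂` seen from `m₁` leaves only the triangle inequality.

Based at the origin, 0-hyperbolicity says that the Gromov product satisfies the ultrametric
inequality. In the river plane the product of two points on different vertical lines is that of
their first coordinates `a`, `b`, hence at most `|a|`; on the same line it is `|a|` plus the
product of the second coordinates. So the ultrametric inequality reduces to that of `ℝ`.
-/

section ZeroHyperbolic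

variable {X : Type*} [PseudoMetricSpace X]

/-- The Gromov product `(x | y)_o`: the length that the geodesics from `o` to `x` and from `o` to
`y` share when the space is a tree. -/
noncomputable def gromovProduct (o x y : X) : ℝ :=
  (dist x o + dist y o - dist x y) / 2

theorem gromovProduct_comm (o x y : X) : gromovProduct o x y = gromovProduct o y x := by
  simp only [gromovProduct, dist_comm x y, add_comm]

theorem gromovProduct_nonneg (o x y : X) : 0 ≤ gromovProduct o x y := by
  unfold gromovProduct
  linarith [dist_triangle_right x y o]

theorem gromovProduct_le_dist (o x y : X) : gromovProduct o x y ≤ dist x o := by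
  unfold gromovProduct
  linarith [dist_triangle_left y o x]

variable (X) in
/-- The four-point condition, i.e. Gromov hyperbolicity with constant `0`: of the three ways to
pair off four points, no one has a larger sum of distances than both others. -/
def IsZeroHyperbolic : Prop :=
  ∀ w x y z : X, dist w x + dist y z ≤ max (dist w y + dist x z) (dist w z + dist x y)

theorem IsZeroHyperbolic.min_gromovProduct_le (hX : IsZeroHyperbolic X) (o x y z : X) :
    min (gromovProduct o x y) (gromovProduct o y z) ≤ gromovProduct o x z := by
  unfold gromovProduct
  rw [min_le_iff]
  rcases le_max_iff.mp (hX x z y o) with h | h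
  · left
    linarith
  · right
    linarith [dist_comm y z]

theorem IsZeroHyperbolic.of_min_gromovProduct_le (o : X)
    (h : ∀ x y z : X, min (gromovProduct o x y) (gromovProduct o y z) ≤ gromovProduct o x z) :
    IsZeroHyperbolic X := by
  intro w x y z
  have h_min : min (gromovProduct o w y + gromovProduct o x z)
      (gromovProduct o w z + gromovProduct o x y) ≤
        gromovProduct o w x + gromovProduct o y z := by
    -- If, say, `(w | y)` is the largest of the four products on the left, then `(x | y) ≤ (w | x)`
    -- and `(w | z) ≤ (y | z)`.
    have hwyx := h w y x
    have hwzx := h w z x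
    have hywz := h y w z
    have hyxz := h y x z
    rw [gromovProduct_comm o y x] at hwyx hyxz
    rw [gromovProduct_comm o z x] at hwzx
    rw [gromovProduct_comm o y w] at hywz
    grind
  unfold gromovProduct at h_min
  rw [min_le_iff] at h_min
  rw [le_max_iff]
  refine h_min.imp ?_ ?_ <;> intro <;> linarith

theorem IsZeroHyperbolic.dist_midpoint_le (hX : IsZeroHyperbolic X) {x z m : X}
    (hxm : dist x m = dist x z / 2) (hmz : dist m z = dist x z / 2) (p : X) :
    dist p m ≤ max (dist p x) (dist p z) - dist x z / 2 := by
  have h := hX p m x z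
  rw [dist_comm m x, hxm, hmz, max_add_add_right] at h
  linarith

theorem IsZeroHyperbolic.dist_midpoint_midpoint_le (hX : IsZeroHyperbolic X) {x y z m n : X}
    (hxm : dist x m = dist x z / 2) (hmz : dist m z = dist x z / 2)
    (hyn : dist y n = dist y z / 2) (hnz : dist n z = dist y z / 2) :
    dist m n ≤ dist x y / 2 := by
  have hm : dist m y ≤ max (dist x y) (dist y z) - dist x z / 2 := by
    simpa only [dist_comm y] using hX.dist_midpoint_le hxm hmz y
  have hn : dist m n ≤ max (dist m y) (dist x z / 2) - dist y z / 2 := by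
    simpa only [hmz] using hX.dist_midpoint_le hyn hnz m
  suffices max (dist m y) (dist x z / 2) ≤ (dist x y + dist y z) / 2 by linarith
  have hxy : dist x y ≤ dist x z + dist y z := dist_triangle_right x y z
  have hyz : dist y z ≤ dist x y + dist x z := dist_triangle_left y z x
  have hxz : dist x z ≤ dist x y + dist y z := dist_triangle x y z
  refine max_le (hm.trans ?_) (by linarith)
  rw [sub_le_iff_le_add]
  exact max_le (by linarith) (by linarith)

end ZeroHyperbolic

theorem isZeroHyperbolic_real : IsZeroHyperbolic ℝ := by
  intro p q r s
  simp only [Real.dist_eq, le_max_iff]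
  -- With equal signs regroup `(p - q) + (r - s) = (p - s) - (q - r)`; with opposite signs,
  -- `(p - q) - (r - s) = (p - r) - (q - s)`.
  rcases abs_choice (p - q) with hpq | hpq <;> rcases abs_choice (r - s) with hrs | hrs <;>
    rw [hpq, hrs]
  · right
    linarith [le_abs_self (p - s), neg_le_abs (q - r)]
  · left
    linarith [le_abs_self (p - r), neg_le_abs (q - s)]
  · left
    linarith [neg_le_abs (p - r), le_abs_self (q - s)]
  · right
    linarith [neg_le_abs (p - s), le_abs_self (q - r)]

theorem riverDist_triangle (u v w : ℝ × ℝ) : riverDist u w ≤ riverDist u v + riverDist v w := by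
  have h_fst : |u.1 - w.1| ≤ |u.1 - v.1| + |v.1 - w.1| := abs_sub_le u.1 v.1 w.1
  by_cases huw : u.1 = w.1
  · rw [riverDist_of_fst_eq huw]
    by_cases huv : u.1 = v.1
    · rw [riverDist_of_fst_eq huv, riverDist_of_fst_eq (huv.symm.trans huw)]
      exact abs_sub_le u.2 v.2 w.2
    · rw [riverDist_of_fst_ne huv, riverDist_of_fst_ne (huw ▸ Ne.symm huv)]
      linarith [abs_sub u.2 w.2, abs_nonneg v.2, abs_nonneg (u.1 - v.1), abs_nonneg (v.1 - w.1)]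
  · rw [riverDist_of_fst_ne huw]
    by_cases huv : u.1 = v.1
    · rw [riverDist_of_fst_eq huv, riverDist_of_fst_ne (huv ▸ huw), ← huv]
      linarith [abs_sub_abs_le_abs_sub u.2 v.2]
    rw [riverDist_of_fst_ne huv]
    by_cases hvw : v.1 = w.1
    · rw [riverDist_of_fst_eq hvw, hvw]
      linarith [abs_sub_abs_le_abs_sub w.2 v.2, abs_sub_comm v.2 w.2]
    · rw [riverDist_of_fst_ne hvw]
      linarith [abs_nonneg v.2]

/-- The plane `ℝ × ℝ` carrying the river metric; a type synonym, because `ℝ × ℝ` already has the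
supremum metric. -/
def River : Type := ℝ × ℝ

namespace River

noncomputable instance : MetricSpace River where
  dist := riverDist
  dist_self := riverDist_self
  dist_comm := riverDist_comm
  dist_triangle := riverDist_triangle
  eq_of_dist_eq_zero := eq_of_riverDist_eq_zero

/-- The origin of the river plane, the base point for its Gromov products. -/
def origin : River := (0, 0)

theorem dist_origin (u : River) : dist u origin = |u.1| + |u.2| := by
  have h : dist u origin = if u.1 = 0 then |u.2 - 0| else |u.2| + |(0 : ℝ)| + |u.1 - 0| := rfl
  rw [h]
  split_ifs with hu <;> simp [hu, add_comm]

theorem gromovProduct_of_fst_eq {u v : River} (h : u.1 = v.1) :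
    gromovProduct origin u v = |u.1| + gromovProduct 0 u.2 v.2 := by
  have huv : dist u v = |u.2 - v.2| := riverDist_of_fst_eq h
  simp only [gromovProduct, dist_origin, huv, ← h, Real.dist_eq, sub_zero]
  ring

theorem gromovProduct_of_fst_ne {u v : River} (h : u.1 ≠ v.1) :
    gromovProduct origin u v = gromovProduct 0 u.1 v.1 := by
  have huv : dist u v = |u.2| + |v.2| + |u.1 - v.1| := riverDist_of_fst_ne h
  simp only [gromovProduct, dist_origin, huv, Real.dist_eq, sub_zero]
  ring

theorem isZeroHyperbolic : IsZeroHyperbolic River := by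
  refine .of_min_gromovProduct_le origin fun u v w => ?_
  by_cases huw : u.1 = w.1
  · rw [gromovProduct_of_fst_eq huw]
    by_cases huv : u.1 = v.1
    · rw [gromovProduct_of_fst_eq huv, gromovProduct_of_fst_eq (huv.symm.trans huw), ← huv,
        min_add_add_left]
      gcongr
      exact isZeroHyperbolic_real.min_gromovProduct_le 0 u.2 v.2 w.2
    · calc min (gromovProduct origin u v) (gromovProduct origin v w)
          ≤ gromovProduct 0 u.1 v.1 := gromovProduct_of_fst_ne huv ▸ min_le_left _ _
        _ ≤ |u.1| := by simpa using gromovProduct_le_dist 0 u.1 v.1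
        _ ≤ |u.1| + gromovProduct 0 u.2 w.2 :=
          le_add_of_nonneg_right (gromovProduct_nonneg 0 u.2 w.2)
  · rw [gromovProduct_of_fst_ne huw]
    by_cases huv : u.1 = v.1
    · rw [gromovProduct_of_fst_ne (huv ▸ huw : v.1 ≠ w.1), ← huv]
      exact min_le_right _ _
    by_cases hvw : v.1 = w.1
    · rw [gromovProduct_of_fst_ne huv, hvw]
      exact min_le_left _ _
    · rw [gromovProduct_of_fst_ne huv, gromovProduct_of_fst_ne hvw]
      exact isZeroHyperbolic_real.min_gromovProduct_le 0 u.1 v.1 w.1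

end River

/-- (ℝ², d*) is globally non-positively Busemann curved. -/
theorem river_NPBC :
    ∀ x y z m₁ m₂ : ℝ × ℝ, IsRiverMidpoint x z m₁ → IsRiverMidpoint y z m₂ →
      riverDist m₁ m₂ ≤ (1 / 2) * riverDist x y := by
  rintro x y z m₁ m₂ ⟨hxm, hmz⟩ ⟨hyn, hnz⟩
  rw [one_div_mul_eq_div]
  exact River.isZeroHyperbolic.dist_midpoint_midpoint_le hxm hmz hyn hnz
end
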